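/- Let α, β, c be real numbers such that 1+β, α+β+2c+2, c+1, α+β+c+1 and α+β+2c+1 are not nonpositive integers, let x ∈ (0,1) be real, and let t be real with 0 < |t| < 1. Set δ = ((1+t) − √((1+t)² − 4xt))/(2t), with the principal branch of the square root. Then Σ_{n=0}^{∞} ((α+β+c+1)_n (c+1)_n)/((α+β+2c+2)_n) · U_n^{(α,β)}(x;c) · t^n/n! = (δ^{α+β+c+1})/(x^{β+c+1}·(x−tδ)^{α}) · F(−c, α+β+c+1; 1+β; δ) · F(β+c+1, c+1; α+β+2c+2; tδ/x), where complex powers are taken with the principal branch. -/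

import Mathlib

noncomputable section

/-- Rising factorial (Pochhammer symbol) `(a)_n = a(a+1)⋯(a+n-1)`. -/
def poch (a : ℝ) (n : ℕ) : ℝ := ∏ i ∈ Finset.range n, (a + (i : ℝ))

/-- The Gauss hypergeometric series `F(a,b;c;x) = Σ_{k≥0} (a)_k (b)_k / ((c)_k k!) xᵏ`. -/
def hyp (a b c x : ℝ) : ℝ :=
  ∑' k : ℕ, poch a k * poch b k / (poch c k * (Nat.factorial k : ℝ)) * x ^ k

/-- The Gauss hypergeometric function for real arguments `z < 1`, extended by
(principal branch) analytic continuation to arguments `z ≤ -1` via the Pfaff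
transformation `F(a,b;c;z) = (1-z)^{-a} F(a, c-b; c; z/(z-1))`, whose right-hand
side converges for all `z < 0`. -/
def hypExt (a b c z : ℝ) : ℝ :=
  if z < 0 then (1 - z) ^ (-a) * hyp a (c - b) c (z / (z - 1)) else hyp a b c z

/-- `δ = ((1+t) − √((1+t)² − 4xt))/(2t)`; for `x ∈ (0,1)` and `0 < |t| < 1` the
radicand is positive, so the principal branch of the complex square root is
the real square root. -/
def deltaF (x t : ℝ) : ℝ := ((1 + t) - Real.sqrt ((1 + t)^2 - 4*x*t)) / (2*t)

/-- `U_n^{(α,β)}(x;c)`. -/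
def Ufun (α β c : ℝ) (n : ℕ) (x : ℝ) : ℝ :=
  (-1 : ℝ)^n * (poch (β + c + 1) n / poch (c + 1) n)
    * hyp (-(n:ℝ) - c) ((n:ℝ) + α + β + c + 1) (1 + β) x

/-- `Ũ_n^{(α,β)}(x;c)`. -/
def Ut (α β c : ℝ) (n : ℕ) (x : ℝ) : ℝ :=
  (poch (c + 1) n * poch (α + β + c + 1) n / poch (α + β + 2*c + 1) (2*n)) * Ufun α β c n x

/-!
Let `q` be the larger root of `q² = (1 + t) q - x t`, so that `δ = x / q` and `w = t δ / x = t / q`.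
The generating series is formally annihilated by a second order operator in `(x, t)`, which in the
variables `(δ, w)` separates into two hypergeometric operators; the closed form is a product of two
hypergeometric functions, one in each variable, and is therefore annihilated too. Its Taylor
coefficients in `t` are then regular solutions of hypergeometric equations in `x`, so each of them
is a hypergeometric function up to its value at `x = 0`, where Pfaff's transformation evaluates the
closed form. The Taylor series at `t = 0` represents the closed form on all of `|t| < 1` because
`F(-(c + n), b + n; γ; x)` grows at most polynomially in `n`, by an energy estimate for the
hypergeometric equation.
-/

open Set Filter Topology Asymptotics
open FormalMultilinearSeries (ofScalars)

section PowerSeries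

variable {𝕜 : Type*} [NontriviallyNormedField 𝕜] [CompleteSpace 𝕜]

lemma eventuallyEq_of_iteratedDeriv_eq [CharZero 𝕜] {f g : 𝕜 → 𝕜} {z : 𝕜}
    (hf : AnalyticAt 𝕜 f z) (hg : AnalyticAt 𝕜 g z)
    (h : ∀ n, iteratedDeriv n f z = iteratedDeriv n g z) : f =ᶠ[𝓝 z] g := by
  have hf' := hf.hasFPowerSeriesAt
  simp only [h] at hf'
  have hsub := hf'.sub hg.hasFPowerSeriesAt
  rw [sub_self] at hsub
  filter_upwards [hsub.eventually_eq_zero] with y hy using sub_eq_zero.1 hy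

lemma hasSum_deriv_of_hasFPowerSeriesOnBall_ofScalars {f : 𝕜 → 𝕜} {u : ℕ → 𝕜} {r : ENNReal}
    (h : HasFPowerSeriesOnBall f (ofScalars 𝕜 u) 0 r) {x : 𝕜} (hx : x ∈ Metric.eball 0 r) :
    HasSum (fun k : ℕ => ((k : 𝕜) + 1) * u (k + 1) * x ^ k) (deriv f x) := by
  have hsum := (h.fderiv.hasSum hx).mapL (ContinuousLinearMap.apply 𝕜 𝕜 (1 : 𝕜))
  simp only [zero_add, ContinuousLinearMap.apply_apply, fderiv_apply_one_eq_deriv] at hsum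
  convert! hsum using 2 with k
  rw [FormalMultilinearSeries.apply_eq_pow_smul_coeff]
  simp [FormalMultilinearSeries.derivSeries_coeff_one, mul_comm]

end PowerSeries

lemma hasSum_mul_pow_of_succ {R : Type*} [Ring R] [TopologicalSpace R] [IsTopologicalRing R]
    {u : ℕ → R} {x s : R} (h : HasSum (fun k => u (k + 1) * x ^ k) s) (h0 : u 0 = 0) :
    HasSum (fun k => u k * x ^ k) (s * x) := by
  rw [← hasSum_nat_add_iff' 1]
  simpa [h0, pow_succ, mul_assoc] using h.mul_right x

lemma mem_eball_zero_one {x : ℝ} : x ∈ Metric.eball (0 : ℝ) 1 ↔ |x| < 1 := by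
  rw [← ENNReal.ofReal_one, Metric.eball_ofReal, mem_ball_zero_iff, Real.norm_eq_abs]

lemma hasSum_iteratedDeriv_mul_pow {f : ℝ → ℝ} (hf : ∀ t, |t| < 1 → AnalyticAt ℝ f t)
    (hs : ∀ t : ℝ, |t| < 1 → Summable fun n => iteratedDeriv n f 0 / n.factorial * t ^ n)
    {t : ℝ} (ht : |t| < 1) :
    HasSum (fun n => iteratedDeriv n f 0 / n.factorial * t ^ n) (f t) := by
  have hradius : 1 ≤ (ofScalars ℝ fun n => iteratedDeriv n f 0 / (n.factorial : ℝ)).radius := by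
    refine ENNReal.le_of_forall_nnreal_lt fun r hr =>
      FormalMultilinearSeries.le_radius_of_summable _ ?_
    have hr1 : |(r : ℝ)| < 1 := by simpa using hr
    simpa [abs_mul, abs_div] using (hs r hr1).abs
  have hseries := AnalyticOn.hasFPowerSeriesOnSubball one_pos
    (fun y hy => (hf y (mem_eball_zero_one.1 hy)).analyticWithinAt) hradius
  simpa [mul_comm] using hseries.hasSum (mem_eball_zero_one.2 ht)

lemma analyticAt_rpow_const {E : Type*} [NormedAddCommGroup E] [NormedSpace ℝ E]
    {f : E → ℝ} {z : E} (hf : AnalyticAt ℝ f z) (hz : f z ≠ 0) (s : ℝ) :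
    AnalyticAt ℝ (fun y => f y ^ s) z :=
  (ContDiffAt.rpow_const_of_ne (n := ⊤) hf.contDiffAt hz).analyticAt

section Pochhammer

lemma poch_zero (a : ℝ) : poch a 0 = 1 := Finset.prod_range_zero _

lemma poch_succ (a : ℝ) (n : ℕ) : poch a (n + 1) = poch a n * (a + n) :=
  Finset.prod_range_succ _ n

lemma poch_succ' (a : ℝ) (n : ℕ) : poch a (n + 1) = a * poch (a + 1) n := by
  simp only [poch, Finset.prod_range_succ', Nat.cast_zero, add_zero, Nat.cast_add, Nat.cast_one,
    add_comm _ (1 : ℝ), ← add_assoc, mul_comm]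

lemma poch_ne_zero {a : ℝ} (ha : ∀ m : ℕ, a ≠ -(m : ℝ)) (n : ℕ) : poch a n ≠ 0 :=
  Finset.prod_ne_zero_iff.2 fun m _ h => ha m (eq_neg_of_add_eq_zero_left h)

lemma poch_eq_eval_ascPochhammer (a : ℝ) (n : ℕ) : poch a n = (ascPochhammer ℝ n).eval a := by
  induction n with
  | zero => simp [poch_zero]
  | succ n ih => rw [poch_succ, ascPochhammer_succ_eval, ih]

lemma add_one_ne_neg_natCast {c : ℝ} (hc : ∀ m : ℕ, c ≠ -(m : ℝ)) (m : ℕ) :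
    c + 1 ≠ -(m : ℝ) := fun h =>
  hc (m + 1) (by push_cast; linarith)

end Pochhammer

section HypergeometricSeries

/-- The coefficient `(a)_k (b)_k / ((c)_k k!)` of the hypergeometric series. -/
def hypCoeff (a b c : ℝ) (k : ℕ) : ℝ :=
  poch a k * poch b k / (poch c k * (k.factorial : ℝ))

variable (a b c : ℝ)

lemma hypCoeff_zero : hypCoeff a b c 0 = 1 := by simp [hypCoeff, poch_zero]

lemma hypCoeff_succ' (k : ℕ) :
    ((k : ℝ) + 1) * hypCoeff a b c (k + 1)
      = a * b / c * hypCoeff (a + 1) (b + 1) (c + 1) k := by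
  simp only [hypCoeff, poch_succ', Nat.factorial_succ, Nat.cast_mul, Nat.cast_add_one]
  field_simp

variable {c} in
lemma hypCoeff_succ (hc : ∀ m : ℕ, c ≠ -(m : ℝ)) (k : ℕ) :
    (c + k) * ((k : ℝ) + 1) * hypCoeff a b c (k + 1) = (a + k) * (b + k) * hypCoeff a b c k := by
  have hck : c + k ≠ 0 := fun h => hc k (eq_neg_of_add_eq_zero_left h)
  have hpoch := poch_ne_zero hc k
  simp only [hypCoeff, poch_succ, Nat.factorial_succ, Nat.cast_mul, Nat.cast_add_one]
  field_simp

lemma hypCoeff_eq_ordinaryHypergeometricCoefficient :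
    hypCoeff a b c = ordinaryHypergeometricCoefficient a b c := by
  ext k
  simp only [hypCoeff, poch_eq_eval_ascPochhammer, div_eq_mul_inv, mul_inv]
  ring

lemma one_le_radius_ordinaryHypergeometricSeries :
    1 ≤ (ordinaryHypergeometricSeries ℝ a b c).radius := by
  by_cases h : ∀ k : ℕ, (k : ℝ) ≠ -a ∧ (k : ℝ) ≠ -b ∧ (k : ℝ) ≠ -c
  · exact (ordinaryHypergeometricSeries_radius_eq_one ℝ a b c h).ge
  · push Not at h
    obtain ⟨k, hk⟩ := h
    by_cases ha : (k : ℝ) = -a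
    · rw [show a = -(k : ℝ) by linarith, ordinaryHypergeometric_radius_top_of_neg_nat₁]
      exact le_top
    by_cases hb : (k : ℝ) = -b
    · rw [show b = -(k : ℝ) by linarith, ordinaryHypergeometric_radius_top_of_neg_nat₂]
      exact le_top
    · rw [show c = -(k : ℝ) by linarith [hk ha hb], ordinaryHypergeometric_radius_top_of_neg_nat₃]
      exact le_top

lemma hyp_eq_ordinaryHypergeometric : hyp a b c = ordinaryHypergeometric a b c := by
  ext x
  rw [ordinaryHypergeometric, ordinaryHypergeometricSeries,
    ← hypCoeff_eq_ordinaryHypergeometricCoefficient]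
  exact (FormalMultilinearSeries.ofScalars_sum_eq (hypCoeff a b c) x).symm

lemma hasFPowerSeriesOnBall_hyp :
    HasFPowerSeriesOnBall (hyp a b c) (ofScalars ℝ (hypCoeff a b c)) 0 1 := by
  have hr := one_le_radius_ordinaryHypergeometricSeries a b c
  rw [hyp_eq_ordinaryHypergeometric, hypCoeff_eq_ordinaryHypergeometricCoefficient]
  exact (FormalMultilinearSeries.hasFPowerSeriesOnBall _ (one_pos.trans_le hr)).mono one_pos hr

lemma hyp_zero : hyp a b c 0 = 1 := by
  rw [hyp_eq_ordinaryHypergeometric, ordinaryHypergeometric_zero]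

lemma hyp_comm (x : ℝ) : hyp a b c x = hyp b a c x := by
  simp only [hyp, mul_comm (poch a _)]

variable {z : ℝ}

lemma hasSum_hyp (hz : |z| < 1) : HasSum (fun k => hypCoeff a b c k * z ^ k) (hyp a b c z) := by
  simpa [mul_comm] using (hasFPowerSeriesOnBall_hyp a b c).hasSum (mem_eball_zero_one.2 hz)

lemma analyticAt_hyp (hz : |z| < 1) : AnalyticAt ℝ (hyp a b c) z :=
  (hasFPowerSeriesOnBall_hyp a b c).analyticAt_of_mem (mem_eball_zero_one.2 hz)

lemma hasSum_deriv_hyp (hz : |z| < 1) :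
    HasSum (fun k : ℕ => ((k : ℝ) + 1) * hypCoeff a b c (k + 1) * z ^ k) (deriv (hyp a b c) z) :=
  hasSum_deriv_of_hasFPowerSeriesOnBall_ofScalars (hasFPowerSeriesOnBall_hyp a b c)
    (mem_eball_zero_one.2 hz)

lemma deriv_hyp (hz : |z| < 1) :
    deriv (hyp a b c) z = a * b / c * hyp (a + 1) (b + 1) (c + 1) z := by
  refine (hasSum_deriv_hyp a b c hz).unique ?_
  simp only [hypCoeff_succ', mul_assoc]
  exact (hasSum_hyp _ _ _ hz).mul_left _

end HypergeometricSeries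

section HypergeometricEquation

/-- The hypergeometric differential operator
`z (1 - z) h'' + (c - (a + b + 1) z) h' - a b h`, evaluated at `z`. -/
def hypOp (a b c : ℝ) (h : ℝ → ℝ) (z : ℝ) : ℝ :=
  z * (1 - z) * deriv (deriv h) z + (c - (a + b + 1) * z) * deriv h z - a * b * h z

variable {a b c : ℝ}

lemma hypOp_congr {f g : ℝ → ℝ} {z : ℝ} (h : f =ᶠ[𝓝 z] g) :
    hypOp a b c f z = hypOp a b c g z := by
  simp only [hypOp, h.eq_of_nhds, h.deriv_eq, h.deriv.deriv_eq]

lemma hypOp_const_mul (r : ℝ) (h : ℝ → ℝ) (z : ℝ) :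
    hypOp a b c (fun y => r * h y) z = r * hypOp a b c h z := by
  simp only [hypOp, deriv_const_mul_field']
  ring

lemma hypOp_mul_const (r : ℝ) (h : ℝ → ℝ) (z : ℝ) :
    hypOp a b c (fun y => h y * r) z = hypOp a b c h z * r := by
  simp only [mul_comm _ r, hypOp_const_mul]

lemma analyticAt_hypOp {h : ℝ → ℝ} {z : ℝ} (hh : AnalyticAt ℝ h z) :
    AnalyticAt ℝ (hypOp a b c h) z := by
  have h1 := hh.deriv
  have := h1.deriv
  unfold hypOp
  fun_prop

lemma hasSum_deriv_deriv_hyp {z : ℝ} (hz : |z| < 1) :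
    HasSum (fun k : ℕ => ((k : ℝ) + 1) * (((k : ℝ) + 2) * hypCoeff a b c (k + 2)) * z ^ k)
      (deriv (deriv (hyp a b c)) z) := by
  have hderiv : deriv (hyp a b c) =ᶠ[𝓝 z] fun y => a * b / c * hyp (a + 1) (b + 1) (c + 1) y := by
    filter_upwards [(isOpen_lt continuous_abs continuous_const).mem_nhds hz] with y hy
    exact deriv_hyp a b c hy
  rw [hderiv.deriv_eq, deriv_const_mul_field]
  convert! (hasSum_deriv_hyp (a + 1) (b + 1) (c + 1) hz).mul_left (a * b / c) using 2 with k
  have hcoeff := hypCoeff_succ' a b c (k + 1)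
  push_cast at hcoeff
  linear_combination (k + 1) * z ^ k * hcoeff

lemma hypOp_hyp (hc : ∀ m : ℕ, c ≠ -(m : ℝ)) {z : ℝ} (hz : |z| < 1) :
    hypOp a b c (hyp a b c) z = 0 := by
  have h0 := hasSum_hyp a b c hz
  have h1 := hasSum_deriv_hyp a b c hz
  have h2 := hasSum_deriv_deriv_hyp (a := a) (b := b) (c := c) hz
  have h1z : HasSum (fun k : ℕ => k * hypCoeff a b c k * z ^ k) (deriv (hyp a b c) z * z) :=
    hasSum_mul_pow_of_succ (by simpa using h1) (by simp)
  have h2z : HasSum (fun k : ℕ => k * ((k + 1) * hypCoeff a b c (k + 1)) * z ^ k)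
      (deriv (deriv (hyp a b c)) z * z) :=
    hasSum_mul_pow_of_succ (by simpa [add_assoc, one_add_one_eq_two] using h2) (by simp)
  have h2zz : HasSum (fun k : ℕ => k * ((k - 1) * hypCoeff a b c k) * z ^ k)
      (deriv (deriv (hyp a b c)) z * z * z) :=
    hasSum_mul_pow_of_succ (by simpa [mul_left_comm] using h2z) (by simp)
  have hsum := (((h2z.sub h2zz).add (h1.mul_left c)).sub (h1z.mul_left (a + b + 1))).sub
    (h0.mul_left (a * b))
  have hzero := hasSum_zero.unique (hsum.congr_fun fun k => ?_)
  · rw [hypOp]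
    linear_combination -hzero
  · linear_combination -z ^ k * hypCoeff_succ a b hc k

lemma deriv_hypOp {h : ℝ → ℝ} {z : ℝ} (hh : AnalyticAt ℝ h z) :
    deriv (hypOp a b c h) z = hypOp (a + 1) (b + 1) (c + 1) (deriv h) z := by
  have h0 := hh.differentiableAt.hasDerivAt
  have h1 := hh.deriv.differentiableAt.hasDerivAt
  have h2 := hh.deriv.deriv.differentiableAt.hasDerivAt
  have hid := hasDerivAt_id z
  have hop : HasDerivAt (hypOp a b c h) _ z :=
    (((hid.mul (hid.const_sub 1)).mul h2).add
      (((hid.const_mul (a + b + 1)).const_sub c).mul h1)).sub (h0.const_mul (a * b))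
  rw [hop.deriv, hypOp]
  simp only [id, Pi.mul_apply]
  ring

lemma iteratedDeriv_zero_of_hypOp_eq_zero (hc : ∀ m : ℕ, c ≠ -(m : ℝ)) {h : ℝ → ℝ}
    (hh : AnalyticAt ℝ h 0) (hop : hypOp a b c h =ᶠ[𝓝 0] 0) (k : ℕ) :
    iteratedDeriv k h 0 = k.factorial * (h 0 * hypCoeff a b c k) := by
  induction k generalizing a b c h with
  | zero => simp [hypCoeff_zero]
  | succ k ih =>
    have hop' : hypOp (a + 1) (b + 1) (c + 1) (deriv h) =ᶠ[𝓝 0] 0 := by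
      filter_upwards [hop.eventuallyEq_nhds, hh.eventually_analyticAt] with y hy hhy
      rw [← deriv_hypOp hhy, hy.deriv_eq]
      exact deriv_const y 0
    have hc0 : c ≠ 0 := by simpa using hc 0
    have hderiv : deriv h 0 = a * b / c * h 0 := by
      have := hop.eq_of_nhds
      simp only [hypOp, Pi.zero_apply] at this
      field_simp
      linarith
    rw [iteratedDeriv_succ', ih (add_one_ne_neg_natCast hc) hh.deriv hop', hderiv,
      Nat.factorial_succ]
    push_cast
    linear_combination -(k.factorial * h 0) * hypCoeff_succ' a b c k

lemma iteratedDeriv_hyp_zero (hc : ∀ m : ℕ, c ≠ -(m : ℝ)) (k : ℕ) :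
    iteratedDeriv k (hyp a b c) 0 = k.factorial * hypCoeff a b c k := by
  rw [iteratedDeriv_zero_of_hypOp_eq_zero hc (analyticAt_hyp a b c (by simp)) ?_ k, hyp_zero,
    one_mul]
  filter_upwards [(isOpen_lt continuous_abs continuous_const).mem_nhds
    (show |(0 : ℝ)| < 1 by simp)] with z hz using hypOp_hyp hc hz

lemma eventuallyEq_hyp_of_hypOp_eq_zero (hc : ∀ m : ℕ, c ≠ -(m : ℝ)) {h : ℝ → ℝ}
    (hh : AnalyticAt ℝ h 0) (hop : hypOp a b c h =ᶠ[𝓝 0] 0) :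
    h =ᶠ[𝓝 0] fun z => h 0 * hyp a b c z := by
  have hhyp := analyticAt_hyp a b c (show |(0 : ℝ)| < 1 by simp)
  refine eventuallyEq_of_iteratedDeriv_eq hh (analyticAt_const.mul hhyp) fun k => ?_
  rw [iteratedDeriv_const_mul_field, iteratedDeriv_hyp_zero hc,
    iteratedDeriv_zero_of_hypOp_eq_zero hc hh hop]
  ring

end HypergeometricEquation

section Pfaff

/-- The Pfaff transform `(1 - z)^(-a) f(z / (z - 1))`, which carries solutions of the
hypergeometric equation with parameters `a, c - b, c` to solutions with parameters `a, b, c`. -/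
def pfaffTransform (a : ℝ) (f : ℝ → ℝ) (z : ℝ) : ℝ :=
  (1 - z) ^ (-a) * f (z / (z - 1))

variable {a b c z : ℝ}

lemma div_sub_one_lt_one (hz : z < 1) : z / (z - 1) < 1 := by
  rw [div_lt_one_of_neg (by linarith)]
  linarith

lemma abs_div_sub_one_lt_one (hz : z < 1 / 2) : |z / (z - 1)| < 1 := by
  rw [abs_div, abs_of_neg (show z - 1 < 0 by linarith), div_lt_one (by linarith), abs_lt]
  constructor <;> linarith

lemma one_sub_div_sub_one (hz : z < 1) : 1 - z / (z - 1) = (1 - z)⁻¹ := by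
  have h1 : z - 1 ≠ 0 := by linarith
  have h2 : 1 - z ≠ 0 := by linarith
  field_simp
  ring

lemma div_sub_one_involutive (hz : z < 1) : z / (z - 1) / (z / (z - 1) - 1) = z := by
  have h1 : z - 1 ≠ 0 := by linarith
  rw [show z / (z - 1) - 1 = 1 / (z - 1) by field_simp; ring]
  field_simp

lemma hasDerivAt_div_sub_one (hz : z < 1) :
    HasDerivAt (fun y : ℝ => y / (y - 1)) (-(1 - z / (z - 1)) ^ 2) z := by
  have h1 : z - 1 ≠ 0 := by linarith
  refine ((hasDerivAt_id z).div ((hasDerivAt_id z).sub_const 1) h1).congr_deriv ?_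
  simp only [id]
  field_simp
  ring

lemma pfaffTransform_pfaffTransform (a : ℝ) (f : ℝ → ℝ) (hz : z < 1) :
    pfaffTransform a (pfaffTransform a f) z = f z := by
  have h1 : 0 < 1 - z := by linarith
  rw [pfaffTransform, pfaffTransform, div_sub_one_involutive hz, one_sub_div_sub_one hz,
    ← mul_assoc, ← Real.mul_rpow h1.le (inv_nonneg.2 h1.le), mul_inv_cancel₀ h1.ne', Real.one_rpow,
    one_mul]

lemma analyticAt_pfaffTransform (a : ℝ) {f : ℝ → ℝ} (hz : z < 1)
    (hf : AnalyticAt ℝ f (z / (z - 1))) : AnalyticAt ℝ (pfaffTransform a f) z := by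
  have hdiv : AnalyticAt ℝ (fun y : ℝ => y / (y - 1)) z :=
    analyticAt_id.div (analyticAt_id.sub analyticAt_const) (sub_ne_zero.2 hz.ne)
  exact (analyticAt_rpow_const (analyticAt_const.sub analyticAt_id) (sub_ne_zero.2 hz.ne') _).mul
    (AnalyticAt.fun_comp (f := fun y : ℝ => y / (y - 1)) hf hdiv)

lemma deriv_pfaffTransform (a : ℝ) {f : ℝ → ℝ} (hz : z < 1)
    (hf : DifferentiableAt ℝ f (z / (z - 1))) :
    deriv (pfaffTransform a f) z
      = pfaffTransform (a + 1) (fun v => a * f v - (1 - v) * deriv f v) z := by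
  have hpow := ((hasDerivAt_id z).const_sub 1).rpow_const (p := -a)
    (Or.inl (by simp only [id]; linarith))
  have h : HasDerivAt (pfaffTransform a f) _ z :=
    hpow.mul (hf.hasDerivAt.comp z (hasDerivAt_div_sub_one hz))
  rw [h.deriv]
  simp only [id, pfaffTransform, neg_add, one_sub_div_sub_one hz, ← sub_eq_add_neg,
    Real.rpow_sub_one (sub_ne_zero.2 hz.ne')]
  have h1 : 1 - z ≠ 0 := by linarith
  field_simp
  ring

lemma deriv_deriv_pfaffTransform (a : ℝ) {f : ℝ → ℝ} (hz : z < 1)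
    (hf : AnalyticAt ℝ f (z / (z - 1))) :
    deriv (deriv (pfaffTransform a f)) z = pfaffTransform (a + 2) (fun v =>
      (1 - v) ^ 2 * deriv (deriv f) v - 2 * (a + 1) * (1 - v) * deriv f v
        + a * (a + 1) * f v) z := by
  have hcont : ContinuousAt (fun y : ℝ => y / (y - 1)) z := (hasDerivAt_div_sub_one hz).continuousAt
  have hderiv : deriv (pfaffTransform a f) =ᶠ[𝓝 z]
      pfaffTransform (a + 1) (fun v => a * f v - (1 - v) * deriv f v) := by
    filter_upwards [hcont.eventually hf.eventually_analyticAt, eventually_lt_nhds hz]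
      with y hy hy1 using deriv_pfaffTransform a hy1 hy.differentiableAt
  have hf1 := (hf.differentiableAt.hasDerivAt.const_mul a).sub
    (((hasDerivAt_id (z / (z - 1))).const_sub 1).mul hf.deriv.differentiableAt.hasDerivAt)
  have hf1' : HasDerivAt (fun v => a * f v - (1 - v) * deriv f v) _ (z / (z - 1)) := hf1
  rw [hderiv.deriv_eq, deriv_pfaffTransform (a + 1) hz hf1'.differentiableAt, pfaffTransform,
    pfaffTransform, hf1'.deriv, add_assoc a, one_add_one_eq_two]
  simp only [id]
  ring

lemma hypOp_pfaffTransform {f : ℝ → ℝ} (hz : z < 1) (hf : AnalyticAt ℝ f (z / (z - 1))) :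
    hypOp a b c (pfaffTransform a f) z
      = -pfaffTransform (a + 1) (hypOp a (c - b) c f) z := by
  rw [hypOp, deriv_deriv_pfaffTransform a hz hf, deriv_pfaffTransform a hz hf.differentiableAt]
  have h1 : 0 < 1 - z := by linarith
  have hv : z / (z - 1) = -z / (1 - z) := by rw [← neg_sub, div_neg, neg_div]
  simp only [pfaffTransform, hypOp, neg_add, ← sub_eq_add_neg, Real.rpow_sub h1, Real.rpow_one,
    Real.rpow_two]
  generalize deriv (deriv f) (z / (z - 1)) = f2
  generalize deriv f (z / (z - 1)) = f1
  generalize f (z / (z - 1)) = f0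
  rw [hv]
  field_simp
  ring

lemma pfaffTransform_hyp (hc : ∀ m : ℕ, c ≠ -(m : ℝ)) :
    pfaffTransform a (hyp a (c - b) c) =ᶠ[𝓝 0] hyp a b c := by
  have hlt : ∀ᶠ z : ℝ in 𝓝 0, z < 1 / 2 := eventually_lt_nhds (by norm_num)
  have hzero : pfaffTransform a (hyp a (c - b) c) 0 = 1 := by simp [pfaffTransform, hyp_zero]
  have hanalytic : AnalyticAt ℝ (pfaffTransform a (hyp a (c - b) c)) 0 :=
    analyticAt_pfaffTransform a one_pos (analyticAt_hyp _ _ _ (by simp))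
  have hop : hypOp a b c (pfaffTransform a (hyp a (c - b) c)) =ᶠ[𝓝 0] 0 := by
    filter_upwards [hlt] with z hz
    have hv := abs_div_sub_one_lt_one hz
    rw [hypOp_pfaffTransform (by linarith) (analyticAt_hyp _ _ _ hv), pfaffTransform,
      hypOp_hyp hc hv, mul_zero, neg_zero, Pi.zero_apply]
  simpa [hzero] using eventuallyEq_hyp_of_hypOp_eq_zero hc hanalytic hop

end Pfaff

section Continuation

variable {a b c z : ℝ}

lemma hypExt_of_neg (hz : z < 0) : hypExt a b c z = pfaffTransform a (hyp a (c - b) c) z :=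
  if_pos hz

lemma hypExt_of_nonneg (hz : 0 ≤ z) : hypExt a b c z = hyp a b c z :=
  if_neg hz.not_gt

lemma hypExt_zero : hypExt a b c 0 = 1 := by
  rw [hypExt_of_nonneg le_rfl, hyp_zero]

lemma hypExt_eventuallyEq_hyp (hc : ∀ m : ℕ, c ≠ -(m : ℝ)) :
    hypExt a b c =ᶠ[𝓝 0] hyp a b c := by
  filter_upwards [pfaffTransform_hyp (a := a) (b := b) hc] with z hz
  rcases lt_or_ge z 0 with h | h
  · rw [hypExt_of_neg h, hz]
  · rw [hypExt_of_nonneg h]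

lemma analyticOnNhd_hypExt (hc : ∀ m : ℕ, c ≠ -(m : ℝ)) :
    AnalyticOnNhd ℝ (hypExt a b c) (Iio 1) := by
  intro z hz
  rw [mem_Iio] at hz
  rcases lt_trichotomy z 0 with h | rfl | h
  · have hv := abs_div_sub_one_lt_one (show z < 1 / 2 by linarith)
    refine (analyticAt_pfaffTransform a hz (analyticAt_hyp a (c - b) c hv)).congr ?_
    filter_upwards [eventually_lt_nhds h] with y hy using (hypExt_of_neg hy).symm
  · exact (analyticAt_hyp a b c (by simp)).congr (hypExt_eventuallyEq_hyp hc).symm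
  · refine (analyticAt_hyp a b c (abs_lt.2 ⟨by linarith, hz⟩)).congr ?_
    filter_upwards [eventually_gt_nhds h] with y hy using (hypExt_of_nonneg hy.le).symm

lemma eqOn_Iio_one_of_eventuallyEq {f g : ℝ → ℝ} (hf : AnalyticOnNhd ℝ f (Iio 1))
    (hg : AnalyticOnNhd ℝ g (Iio 1)) (h : f =ᶠ[𝓝 0] g) : EqOn f g (Iio 1) :=
  hf.eqOn_of_preconnected_of_eventuallyEq hg isPreconnected_Iio (show (0 : ℝ) < 1 from one_pos) h

lemma hypOp_hypExt (hc : ∀ m : ℕ, c ≠ -(m : ℝ)) (hz : z < 1) :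
    hypOp a b c (hypExt a b c) z = 0 := by
  refine eqOn_Iio_one_of_eventuallyEq (f := hypOp a b c (hypExt a b c)) (g := fun _ => 0)
    (fun y hy => analyticAt_hypOp (analyticOnNhd_hypExt hc y hy)) analyticOnNhd_const ?_ hz
  filter_upwards [(hypExt_eventuallyEq_hyp (a := a) (b := b) hc).eventuallyEq_nhds,
    (isOpen_lt continuous_abs continuous_const).mem_nhds (show |(0 : ℝ)| < 1 by simp)] with y hy hy1
  rw [hypOp_congr hy, hypOp_hyp hc hy1]

lemma eq_hypExt_of_hypOp_eq_zero (hc : ∀ m : ℕ, c ≠ -(m : ℝ)) {h : ℝ → ℝ}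
    (hh : AnalyticOnNhd ℝ h (Iio 1)) (hop : hypOp a b c h =ᶠ[𝓝 0] 0) (hz : z < 1) :
    h z = h 0 * hypExt a b c z := by
  refine eqOn_Iio_one_of_eventuallyEq (g := fun y => h 0 * hypExt a b c y) hh
    (analyticOnNhd_const.mul (analyticOnNhd_hypExt hc)) ?_ hz
  filter_upwards [eventuallyEq_hyp_of_hypOp_eq_zero hc (hh 0 (mem_Iio.2 one_pos)) hop,
    hypExt_eventuallyEq_hyp (a := a) (b := b) hc] with y hy hy'
  rw [hy, hy']

lemma hypExt_comm (hc : ∀ m : ℕ, c ≠ -(m : ℝ)) (hz : z < 1) :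
    hypExt a b c z = hypExt b a c z := by
  refine eqOn_Iio_one_of_eventuallyEq (analyticOnNhd_hypExt hc) (analyticOnNhd_hypExt hc) ?_ hz
  filter_upwards [hypExt_eventuallyEq_hyp (a := a) (b := b) hc,
    hypExt_eventuallyEq_hyp (a := b) (b := a) hc] with y hy hy'
  rw [hy, hy', hyp_comm]

lemma hypExt_eq_pfaffTransform (hz : z < 1) :
    hypExt a b c z = pfaffTransform a (hypExt a (c - b) c) z := by
  rcases lt_or_ge z 0 with h | h
  · rw [hypExt_of_neg h, pfaffTransform, pfaffTransform,
      hypExt_of_nonneg (div_nonneg_of_nonpos h.le (by linarith))]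
  · rw [hypExt_of_nonneg h]
    rcases h.eq_or_lt with rfl | h
    · simp [pfaffTransform, hypExt_zero, hyp_zero]
    · have hv : z / (z - 1) < 0 := div_neg_of_pos_of_neg h (by linarith)
      rw [← pfaffTransform_pfaffTransform a (hyp a b c) hz, pfaffTransform,
        pfaffTransform.eq_1 a (hypExt a (c - b) c), hypExt_of_neg hv, sub_sub_cancel]

lemma hypExt_euler (hc : ∀ m : ℕ, c ≠ -(m : ℝ)) (hz : z < 1) :
    hypExt a b c z = (1 - z) ^ (c - a - b) * hypExt (c - a) (c - b) c z := by
  have hz' : 0 < 1 - z := by linarith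
  have hv := div_sub_one_lt_one hz
  rw [hypExt_eq_pfaffTransform hz, pfaffTransform, hypExt_comm hc hv, hypExt_eq_pfaffTransform hv,
    pfaffTransform, div_sub_one_involutive hz, one_sub_div_sub_one hz, hypExt_comm hc hz,
    ← mul_assoc, Real.inv_rpow hz'.le, ← Real.rpow_neg hz'.le, ← Real.rpow_add hz']
  congr 2
  ring

end Continuation

/-- The derivative of `Φ` in the direction `v`, as a function of the point, so that it can be
iterated. -/
def dirDeriv {E F : Type*} [NormedAddCommGroup E] [NormedSpace ℝ E] [NormedAddCommGroup F]
    [NormedSpace ℝ F] (v : E) (Φ : E → F) (p : E) : F :=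
  fderiv ℝ Φ p v

local notation "∂₁" => dirDeriv ((1 : ℝ), (0 : ℝ))
local notation "∂₂" => dirDeriv ((0 : ℝ), (1 : ℝ))

section DirectionalDerivatives

variable {E F : Type*} [NormedAddCommGroup E] [NormedSpace ℝ E] [NormedAddCommGroup F]
  [NormedSpace ℝ F] {Φ Ψ : E → F} {p : E}

lemma dirDeriv_congr (h : Φ =ᶠ[𝓝 p] Ψ) (v : E) : dirDeriv v Φ =ᶠ[𝓝 p] dirDeriv v Ψ := by
  filter_upwards [h.fderiv (𝕜 := ℝ)] with y hy
  rw [dirDeriv, dirDeriv, hy]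

variable [CompleteSpace F]

lemma analyticAt_dirDeriv (h : AnalyticAt ℝ Φ p) (v : E) : AnalyticAt ℝ (dirDeriv v Φ) p :=
  ((ContinuousLinearMap.apply ℝ F v).analyticAt _).comp h.fderiv

lemma dirDeriv_comm (h : AnalyticAt ℝ Φ p) (v w : E) :
    dirDeriv v (dirDeriv w Φ) p = dirDeriv w (dirDeriv v Φ) p := by
  have hsecond : ∀ u u' : E, dirDeriv u (dirDeriv u' Φ) p = fderiv ℝ (fderiv ℝ Φ) p u u' := by
    intro u u'
    have hclm : fderiv ℝ (dirDeriv u' Φ) p = _ :=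
      fderiv_clm_apply h.fderiv.differentiableAt (differentiableAt_const u')
    rw [dirDeriv, hclm]
    simp
  rw [hsecond, hsecond, h.contDiffAt.isSymmSndFDerivAt_of_omega.eq]

lemma analyticAt_iterate_dirDeriv (h : AnalyticAt ℝ Φ p) (v : E) (n : ℕ) :
    AnalyticAt ℝ ((dirDeriv v)^[n] Φ) p := by
  induction n generalizing Φ with
  | zero => exact h
  | succ _ ih => exact ih (analyticAt_dirDeriv h v)

end DirectionalDerivatives

section PartialDerivatives

variable {Φ : ℝ × ℝ → ℝ} {p : ℝ × ℝ}

lemma hasDerivAt_comp_prodMk {u v : ℝ → ℝ} {s u' v' : ℝ} (hΦ : DifferentiableAt ℝ Φ (u s, v s))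
    (hu : HasDerivAt u u' s) (hv : HasDerivAt v v' s) :
    HasDerivAt (fun y => Φ (u y, v y)) (u' * ∂₁ Φ (u s, v s) + v' * ∂₂ Φ (u s, v s)) s := by
  refine (hΦ.hasFDerivAt.comp_hasDerivAt s (hu.prodMk hv)).congr_deriv ?_
  rw [dirDeriv, dirDeriv, ← smul_eq_mul, ← smul_eq_mul, ← map_smul, ← map_smul, ← map_add]
  simp

lemma hasDerivAt_fst (h : DifferentiableAt ℝ Φ p) :
    HasDerivAt (fun x => Φ (x, p.2)) (∂₁ Φ p) p.1 := by
  simpa using hasDerivAt_comp_prodMk h (hasDerivAt_id p.1) (hasDerivAt_const p.1 p.2)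

lemma hasDerivAt_snd (h : DifferentiableAt ℝ Φ p) :
    HasDerivAt (fun t => Φ (p.1, t)) (∂₂ Φ p) p.2 := by
  simpa using hasDerivAt_comp_prodMk h (hasDerivAt_const p.2 p.1) (hasDerivAt_id p.2)

lemma deriv_fst_eventuallyEq (h : AnalyticAt ℝ Φ p) :
    deriv (fun x => Φ (x, p.2)) =ᶠ[𝓝 p.1] fun x => ∂₁ Φ (x, p.2) := by
  filter_upwards [(Continuous.prodMk_left p.2).continuousAt.eventually h.eventually_analyticAt]
    with x hx using (hasDerivAt_fst hx.differentiableAt).deriv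

lemma deriv_snd_eventuallyEq (h : AnalyticAt ℝ Φ p) :
    deriv (fun t => Φ (p.1, t)) =ᶠ[𝓝 p.2] fun t => ∂₂ Φ (p.1, t) := by
  filter_upwards [(Continuous.prodMk_right p.1).continuousAt.eventually h.eventually_analyticAt]
    with t ht using (hasDerivAt_snd ht.differentiableAt).deriv

lemma iteratedDeriv_snd (h : AnalyticAt ℝ Φ p) (n : ℕ) :
    iteratedDeriv n (fun t => Φ (p.1, t)) p.2 = ∂₂^[n] Φ p := by
  induction n generalizing Φ with
  | zero => simp
  | succ n ih =>
    rw [iteratedDeriv_succ', (deriv_snd_eventuallyEq h).iteratedDeriv_eq,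
      ih (analyticAt_dirDeriv h _), Function.iterate_succ_apply]

lemma hypOp_fst {a b c : ℝ} (h : AnalyticAt ℝ Φ p) :
    hypOp a b c (fun x => Φ (x, p.2)) p.1
      = p.1 * (1 - p.1) * ∂₁ (∂₁ Φ) p + (c - (a + b + 1) * p.1) * ∂₁ Φ p - a * b * Φ p := by
  have hderiv := deriv_fst_eventuallyEq h
  rw [hypOp, hderiv.deriv_eq, hderiv.eq_of_nhds,
    (hasDerivAt_fst (analyticAt_dirDeriv h _).differentiableAt).deriv]

lemma hypOp_snd {a b c : ℝ} (h : AnalyticAt ℝ Φ p) :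
    hypOp a b c (fun t => Φ (p.1, t)) p.2
      = p.2 * (1 - p.2) * ∂₂ (∂₂ Φ) p + (c - (a + b + 1) * p.2) * ∂₂ Φ p - a * b * Φ p := by
  have hderiv := deriv_snd_eventuallyEq h
  rw [hypOp, hderiv.deriv_eq, hderiv.eq_of_nhds,
    (hasDerivAt_snd (analyticAt_dirDeriv h _).differentiableAt).deriv]

end PartialDerivatives

section GeneratingEquation

/-- The differential operator annihilating `∑ vₙ F(-(a + n), b + n; γ; x) tⁿ`: since
`t ∂₂` multiplies `tⁿ` by `n`, it is the hypergeometric operator in `x` in which the product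
`-(a + n)(b + n)` has been replaced by `-(t ∂₂ + a)(t ∂₂ + b)`. -/
def genOp (γ a b : ℝ) (Φ : ℝ × ℝ → ℝ) (p : ℝ × ℝ) : ℝ :=
  p.1 * (1 - p.1) * ∂₁ (∂₁ Φ) p + (γ - (b - a + 1) * p.1) * ∂₁ Φ p
    + p.2 ^ 2 * ∂₂ (∂₂ Φ) p + (1 + a + b) * p.2 * ∂₂ Φ p + a * b * Φ p

variable {γ a b : ℝ} {Φ : ℝ × ℝ → ℝ} {p : ℝ × ℝ}

lemma analyticAt_genOp (h : AnalyticAt ℝ Φ p) : AnalyticAt ℝ (genOp γ a b Φ) p := by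
  have hfst : AnalyticAt ℝ (fun q : ℝ × ℝ => q.1) p := analyticAt_fst
  have hsnd : AnalyticAt ℝ (fun q : ℝ × ℝ => q.2) p := analyticAt_snd
  have h1 := analyticAt_dirDeriv h ((1 : ℝ), (0 : ℝ))
  have h2 := analyticAt_dirDeriv h ((0 : ℝ), (1 : ℝ))
  have h11 := analyticAt_dirDeriv h1 ((1 : ℝ), (0 : ℝ))
  have h22 := analyticAt_dirDeriv h2 ((0 : ℝ), (1 : ℝ))
  unfold genOp
  fun_prop

lemma dirDeriv_snd_genOp (h : AnalyticAt ℝ Φ p) :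
    ∂₂ (genOp γ a b Φ) p = genOp γ (a + 1) (b + 1) (∂₂ Φ) p := by
  have h1 := analyticAt_dirDeriv h ((1 : ℝ), (0 : ℝ))
  have h2 := analyticAt_dirDeriv h ((0 : ℝ), (1 : ℝ))
  have h11 := analyticAt_dirDeriv h1 ((1 : ℝ), (0 : ℝ))
  have h22 := analyticAt_dirDeriv h2 ((0 : ℝ), (1 : ℝ))
  have hcomm : ∂₂ (∂₁ Φ) =ᶠ[𝓝 p] ∂₁ (∂₂ Φ) := by
    filter_upwards [h.eventually_analyticAt] with y hy using dirDeriv_comm hy _ _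
  have hcomm' : ∂₂ (∂₁ (∂₁ Φ)) p = ∂₁ (∂₁ (∂₂ Φ)) p := by
    rw [dirDeriv_comm h1, (dirDeriv_congr hcomm _).eq_of_nhds]
  have hid := hasDerivAt_id p.2
  have hslice : HasDerivAt (fun t => genOp γ a b Φ (p.1, t)) _ p.2 :=
    (((((hasDerivAt_snd h11.differentiableAt).const_mul (p.1 * (1 - p.1))).add
      ((hasDerivAt_snd h1.differentiableAt).const_mul (γ - (b - a + 1) * p.1))).add
      ((hid.pow 2).mul (hasDerivAt_snd h22.differentiableAt))).add
      ((hid.const_mul (1 + a + b)).mul (hasDerivAt_snd h2.differentiableAt))).add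
      ((hasDerivAt_snd h.differentiableAt).const_mul (a * b))
  rw [(hasDerivAt_snd (analyticAt_genOp h).differentiableAt).unique hslice, hcomm',
    hcomm.eq_of_nhds, genOp]
  simp only [id, Pi.pow_apply]
  push_cast
  ring

lemma genOp_iterate_eventuallyEq_zero (h : AnalyticAt ℝ Φ p) (hop : genOp γ a b Φ =ᶠ[𝓝 p] 0)
    (n : ℕ) : genOp γ (a + n) (b + n) (∂₂^[n] Φ) =ᶠ[𝓝 p] 0 := by
  induction n generalizing a b Φ with
  | zero => simpa using hop
  | succ n ih =>
    have hop' : genOp γ (a + 1) (b + 1) (∂₂ Φ) =ᶠ[𝓝 p] 0 := by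
      filter_upwards [dirDeriv_congr hop (0, 1), h.eventually_analyticAt] with y hy hΦ
      rw [← dirDeriv_snd_genOp hΦ, hy]
      simp [dirDeriv, Pi.zero_def]
    have := ih (analyticAt_dirDeriv h _) hop'
    simpa only [Function.iterate_succ_apply, Nat.cast_add_one, add_assoc, add_comm (1 : ℝ)]
      using this

lemma hypOp_slice_eq_genOp {x : ℝ} (h : AnalyticAt ℝ Φ (x, 0)) :
    hypOp (-a) b γ (fun y => Φ (y, 0)) x = genOp γ a b Φ (x, 0) := by
  rw [hypOp_fst (p := (x, 0)) h, genOp]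
  ring

lemma iteratedDeriv_snd_eq_mul_hypExt (hγ : ∀ m : ℕ, γ ≠ -(m : ℝ))
    (hΦ : ∀ x < 1, AnalyticAt ℝ Φ (x, 0)) (hop : genOp γ a b Φ =ᶠ[𝓝 0] 0) (n : ℕ) {x : ℝ}
    (hx : x < 1) :
    iteratedDeriv n (fun t => Φ (x, t)) 0
      = iteratedDeriv n (fun t => Φ (0, t)) 0 * hypExt (-(a + n)) (b + n) γ x := by
  have hiter : ∀ y < 1, AnalyticAt ℝ (∂₂^[n] Φ) (y, 0) := fun y hy =>
    analyticAt_iterate_dirDeriv (hΦ y hy) _ n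
  have hslice : AnalyticOnNhd ℝ (fun y => ∂₂^[n] Φ (y, 0)) (Iio 1) := fun y hy =>
    AnalyticAt.fun_comp (f := fun y : ℝ => (y, (0 : ℝ))) (hiter y hy)
      (analyticAt_id.prod analyticAt_const)
  have hhyp : hypOp (-(a + n)) (b + n) γ (fun y => ∂₂^[n] Φ (y, 0)) =ᶠ[𝓝 0] 0 := by
    filter_upwards [(Continuous.prodMk_left (0 : ℝ)).continuousAt.eventually
      (genOp_iterate_eventuallyEq_zero (hΦ 0 one_pos) hop n), eventually_lt_nhds one_pos]
      with y hy hy1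
    rw [hypOp_slice_eq_genOp (hiter y hy1), hy]
    rfl
  rw [iteratedDeriv_snd (p := (x, 0)) (hΦ x hx), iteratedDeriv_snd (p := (0, 0)) (hΦ 0 one_pos)]
  exact eq_hypExt_of_hypOp_eq_zero hγ hslice hhyp hx

end GeneratingEquation

section QuadraticVariables

/-- The discriminant of `q² = (1 + t) q - x t`. -/
def quadDisc (p : ℝ × ℝ) : ℝ := (1 + p.2) ^ 2 - 4 * p.1 * p.2

/-- The larger root of `q² = (1 + t) q - x t`; it rationalizes `δ`, which is `x / q`. -/
def quadRoot (p : ℝ × ℝ) : ℝ := (1 + p.2 + √(quadDisc p)) / 2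

/-- The arguments `(δ, w) = (x / q, t / q)` of the two hypergeometric factors of the generating
function, where `w = t δ / x`. -/
def quadVars (p : ℝ × ℝ) : ℝ × ℝ := (p.1 / quadRoot p, p.2 / quadRoot p)

/-- A region on which `quadVars` is analytic with values in `(-∞, 1) × (-∞, 1)`. -/
def quadDomain : Set (ℝ × ℝ) :=
  {p | 0 < quadDisc p ∧ 0 < quadRoot p ∧ p.1 < quadRoot p ∧ p.2 < quadRoot p}

/-- The common factor of the partial derivatives of `quadVars`, in terms of `u = (δ, w)`; it is
the inverse of `√((1 + t)² - 4 x t)`. -/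
def quadJac (u : ℝ × ℝ) : ℝ := (1 - u.2 + u.2 * u.1) / (1 - u.2 * u.1)

variable {p : ℝ × ℝ}

lemma continuous_quadRoot : Continuous quadRoot := by
  unfold quadRoot quadDisc
  fun_prop

lemma isOpen_quadDomain : IsOpen quadDomain := by
  have hdisc : Continuous quadDisc := by unfold quadDisc; fun_prop
  exact (isOpen_lt continuous_const hdisc).inter <|
    (isOpen_lt continuous_const continuous_quadRoot).inter <|
    (isOpen_lt continuous_fst continuous_quadRoot).inter <|
    isOpen_lt continuous_snd continuous_quadRoot

lemma quadRoot_fst_zero {x : ℝ} : quadRoot (x, 0) = 1 := by norm_num [quadRoot, quadDisc]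

lemma quadRoot_zero_snd {t : ℝ} (ht : -1 < t) : quadRoot (0, t) = 1 + t := by
  simp [quadRoot, quadDisc, Real.sqrt_sq (by linarith : 0 ≤ 1 + t)]

lemma mk_zero_mem_quadDomain {x : ℝ} (hx : x < 1) : (x, (0 : ℝ)) ∈ quadDomain := by
  simp [quadDomain, quadRoot_fst_zero, quadDisc, hx]

lemma mk_mem_quadDomain {x t : ℝ} (hx0 : 0 < x) (hx1 : x < 1) (ht : |t| < 1) :
    (x, t) ∈ quadDomain := by
  obtain ⟨ht0, ht1⟩ := abs_lt.1 ht
  have hsqrt := Real.sqrt_nonneg (quadDisc (x, t))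
  have hlt : 2 * x - 1 - t < √(quadDisc (x, t)) := by
    refine Real.lt_sqrt_of_sq_lt ?_
    simp only [quadDisc]
    nlinarith
  refine ⟨?_, ?_, ?_, ?_⟩
  · simp only [quadDisc]
    rcases le_or_gt t 0 with _ | _ <;> nlinarith [mul_pos (sub_pos.2 ht1) (sub_pos.2 ht1)]
  all_goals simp only [quadRoot]; linarith

lemma quadRoot_sq (hp : p ∈ quadDomain) :
    quadRoot p ^ 2 = (1 + p.2) * quadRoot p - p.1 * p.2 := by
  have := Real.sq_sqrt hp.1.le
  simp only [quadRoot, quadDisc] at this ⊢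
  linear_combination this / 4

lemma sqrt_quadDisc : √(quadDisc p) = 2 * quadRoot p - 1 - p.2 := by
  rw [quadRoot]
  ring

lemma two_mul_quadRoot_sub_pos (hp : p ∈ quadDomain) : 0 < 2 * quadRoot p - 1 - p.2 :=
  sqrt_quadDisc ▸ Real.sqrt_pos.2 hp.1

lemma analyticAt_quadRoot (hp : p ∈ quadDomain) : AnalyticAt ℝ quadRoot p := by
  have hfst : AnalyticAt ℝ (fun q : ℝ × ℝ => q.1) p := analyticAt_fst
  have hsnd : AnalyticAt ℝ (fun q : ℝ × ℝ => q.2) p := analyticAt_snd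
  have hdisc : AnalyticAt ℝ quadDisc p := by unfold quadDisc; fun_prop
  have hsqrt : AnalyticAt ℝ (fun q => √(quadDisc q)) p :=
    (hdisc.contDiffAt.sqrt hp.1.ne').analyticAt
  exact ((analyticAt_const.add hsnd).add hsqrt).div analyticAt_const two_ne_zero

lemma analyticAt_quadVars (hp : p ∈ quadDomain) : AnalyticAt ℝ quadVars p :=
  (analyticAt_fst.div (analyticAt_quadRoot hp) hp.2.1.ne').prod
    (analyticAt_snd.div (analyticAt_quadRoot hp) hp.2.1.ne')

lemma quadVars_fst_lt_one (hp : p ∈ quadDomain) : (quadVars p).1 < 1 :=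
  (div_lt_one hp.2.1).2 hp.2.2.1

lemma quadVars_snd_lt_one (hp : p ∈ quadDomain) : (quadVars p).2 < 1 :=
  (div_lt_one hp.2.1).2 hp.2.2.2

lemma quadRoot_mul_one_sub (hp : p ∈ quadDomain) :
    quadRoot p * (1 - (quadVars p).2 + (quadVars p).2 * (quadVars p).1) = 1 := by
  have hq := hp.2.1.ne'
  have := quadRoot_sq hp
  simp only [quadVars]
  field_simp
  linear_combination this

lemma quadRoot_mul_one_sub_mul (hp : p ∈ quadDomain) :
    quadRoot p * (1 - (quadVars p).2 * (quadVars p).1) = 2 * quadRoot p - 1 - p.2 := by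
  have hq := hp.2.1.ne'
  have := quadRoot_sq hp
  simp only [quadVars]
  field_simp
  linear_combination -this

lemma one_sub_quadVars_pos (hp : p ∈ quadDomain) :
    0 < 1 - (quadVars p).2 * (quadVars p).1 :=
  pos_of_mul_pos_right (quadRoot_mul_one_sub_mul hp ▸ two_mul_quadRoot_sub_pos hp) hp.2.1.le

lemma quadJac_quadVars_mul (hp : p ∈ quadDomain) :
    quadJac (quadVars p) * (2 * quadRoot p - 1 - p.2) = 1 := by
  have hs := (one_sub_quadVars_pos hp).ne'
  rw [quadJac, ← quadRoot_mul_one_sub_mul hp]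
  field_simp
  linear_combination quadRoot_mul_one_sub hp

lemma hasDerivAt_quadRoot_fst (hp : p ∈ quadDomain) :
    HasDerivAt (fun x => quadRoot (x, p.2)) (-p.2 * quadJac (quadVars p)) p.1 := by
  have hdisc : HasDerivAt (fun x => quadDisc (x, p.2)) (-(4 * p.2)) p.1 := by
    refine ((((hasDerivAt_id p.1).const_mul 4).mul_const p.2).const_sub
      ((1 + p.2) ^ 2)).congr_deriv ?_
    rw [mul_one]
  have hS := (two_mul_quadRoot_sub_pos hp).ne'
  refine (((hdisc.sqrt hp.1.ne').const_add (1 + p.2)).div_const 2).congr_deriv ?_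
  rw [eq_inv_of_mul_eq_one_left (quadJac_quadVars_mul hp), sqrt_quadDisc]
  field_simp
  ring

lemma hasDerivAt_quadRoot_snd (hp : p ∈ quadDomain) :
    HasDerivAt (fun t => quadRoot (p.1, t)) ((quadRoot p - p.1) * quadJac (quadVars p)) p.2 := by
  have hid := hasDerivAt_id p.2
  have hdisc : HasDerivAt (fun t => quadDisc (p.1, t)) (2 * (1 + p.2) - 4 * p.1) p.2 := by
    refine (((hid.const_add 1).pow 2).sub (hid.const_mul (4 * p.1))).congr_deriv ?_
    simp
  have hS := (two_mul_quadRoot_sub_pos hp).ne'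
  refine (((hid.const_add 1).add (hdisc.sqrt hp.1.ne')).div_const 2).congr_deriv ?_
  rw [eq_inv_of_mul_eq_one_left (quadJac_quadVars_mul hp), sqrt_quadDisc]
  field_simp
  ring

lemma hasDerivAt_quadVars_fst (hp : p ∈ quadDomain) :
    HasDerivAt (fun x => quadVars (x, p.2))
      (quadJac (quadVars p), (quadVars p).2 ^ 2 * quadJac (quadVars p)) p.1 := by
  have hq := hp.2.1.ne'
  have hroot := hasDerivAt_quadRoot_fst hp
  refine (((hasDerivAt_id p.1).div hroot hq).prodMk
    ((hasDerivAt_const p.1 p.2).div hroot hq)).congr_deriv (Prod.ext ?_ ?_)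
  · simp only [id, Prod.mk.eta]
    rw [div_eq_iff (pow_ne_zero 2 hq)]
    linear_combination quadJac (quadVars p) * quadRoot_sq hp - quadRoot p * quadJac_quadVars_mul hp
  · simp only [quadVars, Prod.mk.eta]
    field_simp
    ring

lemma hasDerivAt_quadVars_snd (hp : p ∈ quadDomain) :
    HasDerivAt (fun t => quadVars (p.1, t))
      (-((quadVars p).1 * (1 - (quadVars p).1)) * quadJac (quadVars p),
        (1 - (quadVars p).2) * quadJac (quadVars p)) p.2 := by
  have hq := hp.2.1.ne'
  have hroot := hasDerivAt_quadRoot_snd hp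
  refine (((hasDerivAt_const p.2 p.1).div hroot hq).prodMk
    ((hasDerivAt_id p.2).div hroot hq)).congr_deriv (Prod.ext ?_ ?_)
  · simp only [quadVars, Prod.mk.eta]
    field_simp
    ring
  · have hw : (quadVars p).2 * quadRoot p = p.2 := div_mul_cancel₀ _ hq
    simp only [id, Prod.mk.eta]
    rw [div_eq_iff (pow_ne_zero 2 hq)]
    linear_combination quadJac (quadVars p) * quadRoot_sq hp - quadRoot p * quadJac_quadVars_mul hp
      + quadJac (quadVars p) * quadRoot p * hw

end QuadraticVariables

section Pullback

/-- The function `q^(-A) K(δ, w)` of `(x, t)`. -/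
def pullback (A : ℝ) (K : ℝ × ℝ → ℝ) (p : ℝ × ℝ) : ℝ :=
  quadRoot p ^ (-A) * K (quadVars p)

/-- The operator that `∂₁` induces on `K` when `K` represents `pullback A K`. -/
def pulledFst (A : ℝ) (K : ℝ × ℝ → ℝ) (u : ℝ × ℝ) : ℝ :=
  quadJac u * (A * u.2 * K u + ∂₁ K u + u.2 ^ 2 * ∂₂ K u)

/-- The operator that `∂₂` induces on `K` when `K` represents `pullback A K`. -/
def pulledSnd (A : ℝ) (K : ℝ × ℝ → ℝ) (u : ℝ × ℝ) : ℝ :=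
  quadJac u * (-(A * (1 - u.1)) * K u - u.1 * (1 - u.1) * ∂₁ K u + (1 - u.2) * ∂₂ K u)

variable {A : ℝ} {K : ℝ × ℝ → ℝ} {p u : ℝ × ℝ}

lemma analyticAt_pullback (hp : p ∈ quadDomain) (hK : AnalyticAt ℝ K (quadVars p)) :
    AnalyticAt ℝ (pullback A K) p :=
  (analyticAt_rpow_const (analyticAt_quadRoot hp) hp.2.1.ne' _).mul
    (hK.comp (analyticAt_quadVars hp))

lemma analyticAt_quadJac (hu : 1 - u.2 * u.1 ≠ 0) : AnalyticAt ℝ quadJac u := by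
  have hfst : AnalyticAt ℝ (fun q : ℝ × ℝ => q.1) u := analyticAt_fst
  have hsnd : AnalyticAt ℝ (fun q : ℝ × ℝ => q.2) u := analyticAt_snd
  exact ((analyticAt_const.sub hsnd).add (hsnd.mul hfst)).div
    (analyticAt_const.sub (hsnd.mul hfst)) hu

lemma analyticAt_pulledFst (hu : 1 - u.2 * u.1 ≠ 0) (hK : AnalyticAt ℝ K u) :
    AnalyticAt ℝ (pulledFst A K) u :=
  (analyticAt_quadJac hu).mul <| ((((analyticAt_const.mul analyticAt_snd).mul hK).add
    (analyticAt_dirDeriv hK _)).add ((analyticAt_snd.pow 2).mul (analyticAt_dirDeriv hK _)))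

lemma analyticAt_pulledSnd (hu : 1 - u.2 * u.1 ≠ 0) (hK : AnalyticAt ℝ K u) :
    AnalyticAt ℝ (pulledSnd A K) u := by
  have hfst : AnalyticAt ℝ (fun q : ℝ × ℝ => q.1) u := analyticAt_fst
  have hsnd : AnalyticAt ℝ (fun q : ℝ × ℝ => q.2) u := analyticAt_snd
  have h1 := analyticAt_dirDeriv hK ((1 : ℝ), (0 : ℝ))
  have h2 := analyticAt_dirDeriv hK ((0 : ℝ), (1 : ℝ))
  exact (analyticAt_quadJac hu).mul (by fun_prop)

lemma dirDeriv_fst_pullback (hp : p ∈ quadDomain) (hK : AnalyticAt ℝ K (quadVars p)) :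
    ∂₁ (pullback A K) p = pullback A (pulledFst A K) p := by
  have hvars := hasDerivAt_quadVars_fst hp
  have hslice := ((hasDerivAt_quadRoot_fst hp).rpow_const (p := -A) (.inl hp.2.1.ne')).mul
    (hasDerivAt_comp_prodMk (Φ := K) hK.differentiableAt hvars.fst hvars.snd)
  rw [(hasDerivAt_fst (analyticAt_pullback hp hK).differentiableAt).unique hslice, pullback,
    pulledFst, Prod.mk.eta, Real.rpow_sub_one hp.2.1.ne']
  have hw : p.2 / quadRoot p = (quadVars p).2 := rfl
  simp only [Prod.mk.eta]
  linear_combination A * quadJac (quadVars p) * quadRoot p ^ (-A) * K (quadVars p) * hw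

lemma dirDeriv_snd_pullback (hp : p ∈ quadDomain) (hK : AnalyticAt ℝ K (quadVars p)) :
    ∂₂ (pullback A K) p = pullback A (pulledSnd A K) p := by
  have hq := hp.2.1.ne'
  have hvars := hasDerivAt_quadVars_snd hp
  have hslice := ((hasDerivAt_quadRoot_snd hp).rpow_const (p := -A) (.inl hq)).mul
    (hasDerivAt_comp_prodMk (Φ := K) hK.differentiableAt hvars.fst hvars.snd)
  rw [(hasDerivAt_snd (analyticAt_pullback hp hK).differentiableAt).unique hslice, pullback,
    pulledSnd, Prod.mk.eta, Real.rpow_sub_one hq]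
  have hd : (quadRoot p - p.1) / quadRoot p = 1 - (quadVars p).1 := by
    rw [sub_div, div_self hq, quadVars]
  simp only [Prod.mk.eta]
  linear_combination -(A * quadJac (quadVars p) * quadRoot p ^ (-A) * K (quadVars p)) * hd

lemma dirDeriv_fst_fst_pullback (hp : p ∈ quadDomain) (hK : AnalyticAt ℝ K (quadVars p)) :
    ∂₁ (∂₁ (pullback A K)) p = pullback A (pulledFst A (pulledFst A K)) p := by
  have hfirst : ∂₁ (pullback A K) =ᶠ[𝓝 p] pullback A (pulledFst A K) := by
    filter_upwards [isOpen_quadDomain.mem_nhds hp,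
      (analyticAt_quadVars hp).continuousAt.eventually hK.eventually_analyticAt] with y hy hKy
      using dirDeriv_fst_pullback hy hKy
  rw [(dirDeriv_congr hfirst _).eq_of_nhds,
    dirDeriv_fst_pullback hp (analyticAt_pulledFst (one_sub_quadVars_pos hp).ne' hK)]

lemma dirDeriv_snd_snd_pullback (hp : p ∈ quadDomain) (hK : AnalyticAt ℝ K (quadVars p)) :
    ∂₂ (∂₂ (pullback A K)) p = pullback A (pulledSnd A (pulledSnd A K)) p := by
  have hfirst : ∂₂ (pullback A K) =ᶠ[𝓝 p] pullback A (pulledSnd A K) := by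
    filter_upwards [isOpen_quadDomain.mem_nhds hp,
      (analyticAt_quadVars hp).continuousAt.eventually hK.eventually_analyticAt] with y hy hKy
      using dirDeriv_snd_pullback hy hKy
  rw [(dirDeriv_congr hfirst _).eq_of_nhds,
    dirDeriv_snd_pullback hp (analyticAt_pulledSnd (one_sub_quadVars_pos hp).ne' hK)]

lemma hasDerivAt_quadJac_fst (hu : 1 - u.2 * u.1 ≠ 0) :
    HasDerivAt (fun d => quadJac (d, u.2)) (u.2 * (2 - u.2) / (1 - u.2 * u.1) ^ 2) u.1 := by
  have hmul := (hasDerivAt_id u.1).const_mul u.2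
  refine ((hmul.const_add (1 - u.2)).div (hmul.const_sub 1) hu).congr_deriv ?_
  simp only [id]
  field_simp
  ring

lemma hasDerivAt_quadJac_snd (hu : 1 - u.2 * u.1 ≠ 0) :
    HasDerivAt (fun w => quadJac (u.1, w)) ((2 * u.1 - 1) / (1 - u.2 * u.1) ^ 2) u.2 := by
  have hid := hasDerivAt_id u.2
  have hmul := hid.mul_const u.1
  refine (((hid.const_sub 1).add hmul).div (hmul.const_sub 1) hu).congr_deriv ?_
  simp only [id, Pi.add_apply]
  field_simp
  ring

lemma dirDeriv_fst_pulledFst (hu : 1 - u.2 * u.1 ≠ 0) (hK : AnalyticAt ℝ K u) :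
    ∂₁ (pulledFst A K) u
      = u.2 * (2 - u.2) / (1 - u.2 * u.1) ^ 2 * (A * u.2 * K u + ∂₁ K u + u.2 ^ 2 * ∂₂ K u)
        + quadJac u * (A * u.2 * ∂₁ K u + ∂₁ (∂₁ K) u + u.2 ^ 2 * ∂₁ (∂₂ K) u) := by
  have h1 := analyticAt_dirDeriv hK ((1 : ℝ), (0 : ℝ))
  have h2 := analyticAt_dirDeriv hK ((0 : ℝ), (1 : ℝ))
  refine (hasDerivAt_fst (analyticAt_pulledFst hu hK).differentiableAt).unique ?_
  exact (hasDerivAt_quadJac_fst hu).mul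
    ((((hasDerivAt_fst hK.differentiableAt).const_mul (A * u.2)).add
      (hasDerivAt_fst h1.differentiableAt)).add
      ((hasDerivAt_fst h2.differentiableAt).const_mul (u.2 ^ 2)))

lemma dirDeriv_snd_pulledFst (hu : 1 - u.2 * u.1 ≠ 0) (hK : AnalyticAt ℝ K u) :
    ∂₂ (pulledFst A K) u
      = (2 * u.1 - 1) / (1 - u.2 * u.1) ^ 2 * (A * u.2 * K u + ∂₁ K u + u.2 ^ 2 * ∂₂ K u)
        + quadJac u * (A * K u + A * u.2 * ∂₂ K u + ∂₂ (∂₁ K) u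
          + (2 * u.2 * ∂₂ K u + u.2 ^ 2 * ∂₂ (∂₂ K) u)) := by
  have h1 := analyticAt_dirDeriv hK ((1 : ℝ), (0 : ℝ))
  have h2 := analyticAt_dirDeriv hK ((0 : ℝ), (1 : ℝ))
  have hid := hasDerivAt_id u.2
  refine (hasDerivAt_snd (analyticAt_pulledFst hu hK).differentiableAt).unique ?_
  refine ((hasDerivAt_quadJac_snd hu).mul
    ((((hid.const_mul A).mul (hasDerivAt_snd hK.differentiableAt)).add
      (hasDerivAt_snd h1.differentiableAt)).add
      ((hid.pow 2).mul (hasDerivAt_snd h2.differentiableAt)))).congr_deriv ?_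
  simp

lemma dirDeriv_fst_pulledSnd (hu : 1 - u.2 * u.1 ≠ 0) (hK : AnalyticAt ℝ K u) :
    ∂₁ (pulledSnd A K) u
      = u.2 * (2 - u.2) / (1 - u.2 * u.1) ^ 2
          * (-(A * (1 - u.1)) * K u - u.1 * (1 - u.1) * ∂₁ K u + (1 - u.2) * ∂₂ K u)
        + quadJac u * (A * K u - A * (1 - u.1) * ∂₁ K u - (1 - 2 * u.1) * ∂₁ K u
          - u.1 * (1 - u.1) * ∂₁ (∂₁ K) u + (1 - u.2) * ∂₁ (∂₂ K) u) := by
  have h1 := analyticAt_dirDeriv hK ((1 : ℝ), (0 : ℝ))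
  have h2 := analyticAt_dirDeriv hK ((0 : ℝ), (1 : ℝ))
  have hid := hasDerivAt_id u.1
  refine (hasDerivAt_fst (analyticAt_pulledSnd hu hK).differentiableAt).unique ?_
  refine ((hasDerivAt_quadJac_fst hu).mul
    (((((hid.const_sub 1).const_mul A).neg.mul (hasDerivAt_fst hK.differentiableAt)).sub
      ((hid.mul (hid.const_sub 1)).mul (hasDerivAt_fst h1.differentiableAt))).add
      ((hasDerivAt_fst h2.differentiableAt).const_mul (1 - u.2)))).congr_deriv ?_
  simp only [id, Pi.mul_apply, Pi.neg_apply, Pi.add_apply, Pi.sub_apply]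
  ring

lemma dirDeriv_snd_pulledSnd (hu : 1 - u.2 * u.1 ≠ 0) (hK : AnalyticAt ℝ K u) :
    ∂₂ (pulledSnd A K) u
      = (2 * u.1 - 1) / (1 - u.2 * u.1) ^ 2
          * (-(A * (1 - u.1)) * K u - u.1 * (1 - u.1) * ∂₁ K u + (1 - u.2) * ∂₂ K u)
        + quadJac u * (-(A * (1 - u.1)) * ∂₂ K u - u.1 * (1 - u.1) * ∂₂ (∂₁ K) u
          + (-∂₂ K u + (1 - u.2) * ∂₂ (∂₂ K) u)) := by
  have h1 := analyticAt_dirDeriv hK ((1 : ℝ), (0 : ℝ))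
  have h2 := analyticAt_dirDeriv hK ((0 : ℝ), (1 : ℝ))
  have hid := hasDerivAt_id u.2
  refine (hasDerivAt_snd (analyticAt_pulledSnd hu hK).differentiableAt).unique ?_
  refine ((hasDerivAt_quadJac_snd hu).mul
    ((((hasDerivAt_snd hK.differentiableAt).const_mul (-(A * (1 - u.1)))).sub
      ((hasDerivAt_snd h1.differentiableAt).const_mul (u.1 * (1 - u.1)))).add
      ((hid.const_sub 1).mul (hasDerivAt_snd h2.differentiableAt)))).congr_deriv ?_
  simp

lemma genOp_pullback {γ a b : ℝ} (hp : p ∈ quadDomain) (hK : AnalyticAt ℝ K (quadVars p)) :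
    genOp γ a b (pullback b K) p = pullback b (fun u => quadJac u *
      (hypOp (-a) b γ (fun d => K (d, u.2)) u.1
        + u.2 * hypOp b (b - γ + 1) (a + b + 1) (fun w => K (u.1, w)) u.2)) p := by
  have hs := (one_sub_quadVars_pos hp).ne'
  have hD := right_ne_zero_of_mul_eq_one (quadRoot_mul_one_sub hp)
  have hroot := eq_inv_of_mul_eq_one_left (quadRoot_mul_one_sub hp)
  have hfst : p.1 = (quadVars p).1 * quadRoot p := (div_mul_cancel₀ _ hp.2.1.ne').symm
  have hsnd : p.2 = (quadVars p).2 * quadRoot p := (div_mul_cancel₀ _ hp.2.1.ne').symm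
  have hone_sub : 1 - (quadVars p).1 * quadRoot p
      = (1 - (quadVars p).2) * (1 - (quadVars p).1) * quadRoot p := by
    linear_combination -quadRoot_mul_one_sub hp
  rw [genOp, dirDeriv_fst_fst_pullback hp hK, dirDeriv_snd_snd_pullback hp hK,
    dirDeriv_fst_pullback hp hK, dirDeriv_snd_pullback hp hK, hfst, hsnd, hone_sub]
  simp only [pullback, hypOp_fst hK, hypOp_snd hK]
  rw [pulledFst, dirDeriv_fst_pulledFst hs hK, dirDeriv_snd_pulledFst hs hK,
    pulledSnd, dirDeriv_fst_pulledSnd hs hK, dirDeriv_snd_pulledSnd hs hK, dirDeriv_comm hK (0, 1)]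
  simp only [pulledFst, pulledSnd, quadJac]
  generalize quadRoot p ^ (-b) = Q
  rw [hroot]
  generalize hDdef : 1 - (quadVars p).2 + (quadVars p).2 * (quadVars p).1 = D at hD ⊢
  generalize hsdef : 1 - (quadVars p).2 * (quadVars p).1 = s at hs ⊢
  field_simp
  subst hDdef hsdef
  ring

end Pullback

section GeneratingFunction

/-- The closed form `q^(-b) F(-a, b; γ; δ) F(b, b - γ + 1; a + b + 1; w)` of the generating
function. -/
def genFun (γ a b : ℝ) : ℝ × ℝ → ℝ :=
  pullback b fun u => hypExt (-a) b γ u.1 * hypExt b (b - γ + 1) (a + b + 1) u.2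

variable {γ a b : ℝ}

lemma analyticAt_hypExt_mul_hypExt (hγ : ∀ m : ℕ, γ ≠ -(m : ℝ))
    (hab : ∀ m : ℕ, a + b + 1 ≠ -(m : ℝ)) {u : ℝ × ℝ} (h1 : u.1 < 1) (h2 : u.2 < 1) :
    AnalyticAt ℝ (fun u : ℝ × ℝ => hypExt (-a) b γ u.1 * hypExt b (b - γ + 1) (a + b + 1) u.2) u :=
  ((analyticOnNhd_hypExt hγ u.1 h1).comp analyticAt_fst).mul
    ((analyticOnNhd_hypExt hab u.2 h2).comp analyticAt_snd)

lemma analyticAt_genFun (hγ : ∀ m : ℕ, γ ≠ -(m : ℝ)) (hab : ∀ m : ℕ, a + b + 1 ≠ -(m : ℝ))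
    {p : ℝ × ℝ} (hp : p ∈ quadDomain) : AnalyticAt ℝ (genFun γ a b) p :=
  analyticAt_pullback hp <|
    analyticAt_hypExt_mul_hypExt hγ hab (quadVars_fst_lt_one hp) (quadVars_snd_lt_one hp)

lemma genOp_genFun (hγ : ∀ m : ℕ, γ ≠ -(m : ℝ)) (hab : ∀ m : ℕ, a + b + 1 ≠ -(m : ℝ))
    {p : ℝ × ℝ} (hp : p ∈ quadDomain) : genOp γ a b (genFun γ a b) p = 0 := by
  have h1 := quadVars_fst_lt_one hp
  have h2 := quadVars_snd_lt_one hp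
  rw [genFun, genOp_pullback hp (analyticAt_hypExt_mul_hypExt hγ hab h1 h2), pullback]
  simp only [hypOp_mul_const, hypOp_const_mul, hypOp_hypExt hγ h1, hypOp_hypExt hab h2,
    zero_mul, mul_zero, add_zero]

lemma genFun_zero_fst {t : ℝ} (ht : -1 < t) :
    genFun γ a b (0, t) = hypExt b (a + γ) (a + b + 1) (-t) := by
  rw [hypExt_eq_pfaffTransform (by linarith), genFun, pullback, quadVars,
    quadRoot_zero_snd ht, pfaffTransform, zero_div, hypExt_zero, one_mul, sub_neg_eq_add,
    ← neg_div_neg_eq t]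
  ring_nf

lemma iteratedDeriv_genFun_zero_fst (hab : ∀ m : ℕ, a + b + 1 ≠ -(m : ℝ)) (n : ℕ) :
    iteratedDeriv n (fun t => genFun γ a b (0, t)) 0
      = (-1) ^ n * (n.factorial * hypCoeff b (a + γ) (a + b + 1) n) := by
  have hslice : (fun t => genFun γ a b (0, t)) =ᶠ[𝓝 0] fun t => hyp b (a + γ) (a + b + 1) (-t) := by
    have hneg : Tendsto (fun t : ℝ => -t) (𝓝 0) (𝓝 0) := by simpa using tendsto_neg (0 : ℝ)
    filter_upwards [hneg.eventually (hypExt_eventuallyEq_hyp hab), lt_mem_nhds neg_one_lt_zero]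
      with t ht h1
    rw [genFun_zero_fst h1, ht]
  rw [hslice.iteratedDeriv_eq, iteratedDeriv_comp_neg, neg_zero, iteratedDeriv_hyp_zero hab,
    smul_eq_mul]

lemma iteratedDeriv_genFun_snd (hγ : ∀ m : ℕ, γ ≠ -(m : ℝ))
    (hab : ∀ m : ℕ, a + b + 1 ≠ -(m : ℝ)) (n : ℕ) {x : ℝ} (hx : x < 1) :
    iteratedDeriv n (fun t => genFun γ a b (x, t)) 0
      = (-1) ^ n * (n.factorial * hypCoeff b (a + γ) (a + b + 1) n)
        * hypExt (-(a + n)) (b + n) γ x := by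
  rw [iteratedDeriv_snd_eq_mul_hypExt hγ
    (fun x hx => analyticAt_genFun hγ hab (mk_zero_mem_quadDomain hx)) ?_ n hx,
    iteratedDeriv_genFun_zero_fst hab]
  filter_upwards [isOpen_quadDomain.mem_nhds (mk_zero_mem_quadDomain zero_lt_one)] with p hp
    using genOp_genFun hγ hab hp

end GeneratingFunction

section HypergeometricGrowth

variable {a b c x y : ℝ}

/-- The energy `y (1 - y) F'(y)² - a b F(y)²` of the hypergeometric equation. -/
def hypEnergy (a b c y : ℝ) : ℝ :=
  y * (1 - y) * deriv (hyp a b c) y ^ 2 - a * b * hyp a b c y ^ 2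

lemma hasDerivAt_hypEnergy (hc : ∀ m : ℕ, c ≠ -(m : ℝ)) (hy : |y| < 1) :
    HasDerivAt (hypEnergy a b c)
      ((1 - 2 * c + 2 * (a + b) * y) * deriv (hyp a b c) y ^ 2) y := by
  have han := analyticAt_hyp a b c hy
  have hid := hasDerivAt_id y
  refine (((hid.mul (hid.const_sub 1)).mul (han.deriv.differentiableAt.hasDerivAt.pow 2)).sub
    ((han.differentiableAt.hasDerivAt.pow 2).const_mul (a * b))).congr_deriv ?_
  have hode := hypOp_hyp (a := a) (b := b) hc hy
  simp only [hypOp, Pi.mul_apply, Pi.pow_apply, id] at hode ⊢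
  linear_combination 2 * deriv (hyp a b c) y * hode

/-- The exponent does not involve the product `a * b`, so it does not depend on `n` for the
parameters `-(a + n)`, `b + n`. -/
lemma hypEnergy_le (hc : 1 / 2 ≤ c) (hab : a * b ≤ 0) (hy0 : 0 ≤ y) (hy1 : y < 1) :
    hypEnergy a b c y ≤ Real.exp (2 * |a + b| / (1 - y) * y) * -(a * b) := by
  have hc' : ∀ m : ℕ, c ≠ -(m : ℝ) := fun m => by
    have := m.cast_nonneg (α := ℝ)
    linarith
  set M := 2 * |a + b| / (1 - y)
  have hM : M * (1 - y) = 2 * |a + b| := div_mul_cancel₀ _ (by linarith)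
  have hM0 : 0 ≤ M := div_nonneg (by positivity) (by linarith)
  have hderiv (z : ℝ) (hz : z ∈ Icc 0 y) := (((hasDerivAt_id z).const_mul M).neg.exp).mul
    (hasDerivAt_hypEnergy (a := a) (b := b) hc' (abs_lt.2 ⟨by linarith [hz.1], hz.2.trans_lt hy1⟩))
  have hanti : AntitoneOn (fun z => Real.exp (-(M * z)) * hypEnergy a b c z) (Icc 0 y) := by
    refine antitoneOn_of_hasDerivWithinAt_nonpos (convex_Icc 0 y)
      (fun z hz => (hderiv z hz).continuousAt.continuousWithinAt)
      (fun z hz => (hderiv z (interior_subset hz)).hasDerivWithinAt) fun z hz => ?_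
    obtain ⟨hz0, hzy⟩ := interior_subset hz
    have hrate : 1 - 2 * c + 2 * (a + b) * z ≤ M * (z * (1 - z)) := by
      nlinarith [mul_le_mul_of_nonneg_left (le_abs_self (a + b)) hz0,
        mul_le_mul_of_nonneg_left hzy (mul_nonneg hM0 hz0)]
    have hgrowth : (1 - 2 * c + 2 * (a + b) * z) * deriv (hyp a b c) z ^ 2
        ≤ M * hypEnergy a b c z := by
      rw [hypEnergy]
      nlinarith [mul_le_mul_of_nonneg_right hrate (sq_nonneg (deriv (hyp a b c) z)),
        mul_nonneg hM0 (mul_nonneg (neg_nonneg.2 hab) (sq_nonneg (hyp a b c z)))]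
    simp only [id, Pi.neg_apply]
    linarith [mul_le_mul_of_nonneg_left hgrowth (Real.exp_pos (-(M * z))).le]
  have hle := hanti (left_mem_Icc.2 hy0) (right_mem_Icc.2 hy0) hy0
  simp only [hypEnergy, hyp_zero, Real.exp_neg] at hle ⊢
  rw [inv_mul_le_iff₀ (Real.exp_pos _)] at hle
  simpa using hle

lemma sq_hyp_le (hc : 1 / 2 ≤ c) (hab : a * b < 0) (hy0 : 0 ≤ y) (hyx : y ≤ x) (hx1 : x < 1) :
    hyp a b c y ^ 2 ≤ Real.exp (2 * |a + b| / (1 - x)) := by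
  have henergy := hypEnergy_le hc hab.le hy0 (hyx.trans_lt hx1)
  have hkinetic : 0 ≤ y * (1 - y) * deriv (hyp a b c) y ^ 2 := by
    have : 0 ≤ 1 - y := by linarith
    positivity
  have hexp : Real.exp (2 * |a + b| / (1 - y) * y) ≤ Real.exp (2 * |a + b| / (1 - x)) := by
    refine Real.exp_le_exp.2 ((mul_le_of_le_one_right ?_ (by linarith)).trans ?_)
    · exact div_nonneg (by positivity) (by linarith)
    · gcongr
  refine le_trans ?_ hexp
  refine le_of_mul_le_mul_left ?_ (neg_pos.2 hab)
  rw [hypEnergy] at henergy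
  linarith

lemma abs_hyp_le_of_succ {C : ℝ} (hx1 : x < 1)
    (hC : ∀ z ∈ Icc 0 x, |hyp (a + 1) (b + 1) (c + 1) z| ≤ C) (hy : y ∈ Icc 0 x) :
    |hyp a b c y| ≤ 1 + |a * b / c| * C := by
  have habs (z : ℝ) (hz : z ∈ Icc 0 x) : |z| < 1 := abs_lt.2 ⟨by linarith [hz.1], hz.2.trans_lt hx1⟩
  have h0 : (0 : ℝ) ∈ Icc 0 x := left_mem_Icc.2 (hy.1.trans hy.2)
  have hmean : ‖hyp a b c y - hyp a b c 0‖ ≤ |a * b / c| * C * ‖y - 0‖ := by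
    refine (convex_Icc 0 x).norm_image_sub_le_of_norm_deriv_le
      (fun z hz => (analyticAt_hyp a b c (habs z hz)).differentiableAt) (fun z hz => ?_) h0 hy
    rw [deriv_hyp a b c (habs z hz), norm_mul]
    exact mul_le_mul_of_nonneg_left (hC z hz) (norm_nonneg _)
  have hC0 : 0 ≤ |a * b / c| * C := mul_nonneg (abs_nonneg _) ((abs_nonneg _).trans (hC 0 h0))
  rw [hyp_zero, sub_zero, Real.norm_eq_abs, Real.norm_eq_abs] at hmean
  have htri := abs_add_le (hyp a b c y - 1) 1
  rw [sub_add_cancel, abs_one] at htri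
  nlinarith [mul_le_of_le_one_right hC0 (habs y hy).le]

lemma abs_add_natCast_le (r : ℝ) {n : ℕ} (hn : 1 ≤ n) : |r + n| ≤ (|r| + 1) * n := by
  have hn' : (1 : ℝ) ≤ n := by exact_mod_cast hn
  calc |r + n| ≤ |r| + n := (abs_add_le _ _).trans_eq (by rw [Nat.abs_cast])
    _ ≤ (|r| + 1) * n := by nlinarith [abs_nonneg r]

lemma eventually_abs_hyp_sub_add_natCast_le (hc : 1 / 2 ≤ c) (hx1 : x < 1) :
    ∀ᶠ n : ℕ in atTop, ∀ y ∈ Icc 0 x,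
      |hyp (-(a + n)) (b + n) c y| ≤ √(Real.exp (2 * |b - a| / (1 - x))) := by
  filter_upwards [tendsto_natCast_atTop_atTop.eventually_gt_atTop (-a),
    tendsto_natCast_atTop_atTop.eventually_gt_atTop (-b)] with n ha hb y hy
  refine Real.abs_le_sqrt ?_
  convert! sq_hyp_le hc (a := -(a + n)) (b := b + n) ?_ hy.1 hy.2 hx1 using 5
  · ring
  · nlinarith

/-- Each differentiation raises the lower parameter by one at the cost of two powers of `n`, which
reduces the claim to `1 / 2 ≤ c`. -/
lemma exists_abs_hyp_le_mul_pow (hx1 : x < 1) (a b c : ℝ) :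
    ∃ p : ℕ, ∃ K : ℝ, ∀ᶠ n : ℕ in atTop, ∀ y ∈ Icc 0 x,
      |hyp (-(a + n)) (b + n) c y| ≤ K * (n : ℝ) ^ p := by
  obtain ⟨j, hj⟩ := exists_nat_ge (1 / 2 - c)
  induction j generalizing a b c with
  | zero =>
    refine ⟨0, √(Real.exp (2 * |b - a| / (1 - x))), ?_⟩
    simpa using eventually_abs_hyp_sub_add_natCast_le (c := c) (by simpa using hj) hx1
  | succ j ih =>
    obtain ⟨p, K, hK⟩ := ih (a - 1) (b + 1) (c + 1) (by push_cast at hj; linarith)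
    refine ⟨p + 2, 1 + (|a| + 1) * (|b| + 1) / |c| * |K|, ?_⟩
    filter_upwards [hK, eventually_ge_atTop 1] with n hn hn1 y hy
    have hbound : ∀ z ∈ Icc 0 x,
        |hyp (-(a + n) + 1) (b + n + 1) (c + 1) z| ≤ |K| * (n : ℝ) ^ p := by
      intro z hz
      rw [show -(a + n) + 1 = -(a - 1 + n) by ring, add_right_comm b]
      exact (hn z hz).trans (mul_le_mul_of_nonneg_right (le_abs_self K) (by positivity))
    have hn1' : (1 : ℝ) ≤ (n : ℝ) ^ (p + 2) := one_le_pow₀ (by exact_mod_cast hn1)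
    calc |hyp (-(a + n)) (b + n) c y|
        ≤ 1 + |-(a + n) * (b + n) / c| * (|K| * (n : ℝ) ^ p) :=
          abs_hyp_le_of_succ hx1 hbound hy
      _ = 1 + |a + n| * |b + n| / |c| * (|K| * (n : ℝ) ^ p) := by
          rw [abs_div, abs_mul, abs_neg]
      _ ≤ (n : ℝ) ^ (p + 2)
            + ((|a| + 1) * n) * ((|b| + 1) * n) / |c| * (|K| * (n : ℝ) ^ p) := by
          gcongr
          exacts [abs_add_natCast_le a hn1, abs_add_natCast_le b hn1]
      _ = (1 + (|a| + 1) * (|b| + 1) / |c| * |K|) * (n : ℝ) ^ (p + 2) := by ring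

lemma summable_mul_mul_pow_of_isBigO {u v : ℕ → ℝ} {p : ℕ} {t : ℝ}
    (hv : ∀ r : ℝ, |r| < 1 → Summable fun n => v n * r ^ n)
    (hu : u =O[atTop] fun n : ℕ => (n : ℝ) ^ p) (ht : |t| < 1) :
    Summable fun n => v n * u n * t ^ n := by
  obtain ⟨r, htr, hr1⟩ := exists_between ht
  have hr : |r| < 1 := by rwa [abs_of_pos ((abs_nonneg t).trans_lt htr)]
  refine summable_of_isBigO_nat (hv r hr) ?_
  have hpow : (fun n => u n * t ^ n) =O[atTop] fun n => r ^ n :=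
    (hu.mul (isBigO_refl _ _)).trans
      (isLittleO_pow_const_mul_const_pow_const_pow_of_norm_lt p htr).isBigO
  simpa only [mul_assoc] using (isBigO_refl v atTop).mul hpow

lemma summable_hypCoeff_mul_hyp_mul_pow (hx0 : 0 ≤ x) (hx1 : x < 1) (A B C a b γ : ℝ) {t : ℝ}
    (ht : |t| < 1) :
    Summable fun n : ℕ => hypCoeff A B C n * hyp (-(a + n)) (b + n) γ x * t ^ n := by
  obtain ⟨p, K, hK⟩ := exists_abs_hyp_le_mul_pow hx1 a b γ
  refine summable_mul_mul_pow_of_isBigO (p := p)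
    (fun r hr => (hasSum_hyp A B C hr).summable) (.of_bound K ?_) ht
  filter_upwards [hK] with n hn
  simpa using hn x (right_mem_Icc.2 hx0)

end HypergeometricGrowth

section GeneratingFunctionExpansion

variable {γ a b x t : ℝ}

lemma hasSum_genFun (hγ : ∀ m : ℕ, γ ≠ -(m : ℝ)) (hab : ∀ m : ℕ, a + b + 1 ≠ -(m : ℝ))
    (hx0 : 0 < x) (hx1 : x < 1) (ht : |t| < 1) :
    HasSum (fun n : ℕ => (-1) ^ n * hypCoeff b (a + γ) (a + b + 1) n
      * hyp (-(a + n)) (b + n) γ x * t ^ n) (genFun γ a b (x, t)) := by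
  have hcoeff (n : ℕ) : iteratedDeriv n (fun t => genFun γ a b (x, t)) 0 / n.factorial
      = (-1) ^ n * hypCoeff b (a + γ) (a + b + 1) n * hyp (-(a + n)) (b + n) γ x := by
    have hn : (n.factorial : ℝ) ≠ 0 := by positivity
    rw [iteratedDeriv_genFun_snd hγ hab n hx1, hypExt_of_nonneg hx0.le]
    field_simp
  have han (s : ℝ) (hs : |s| < 1) : AnalyticAt ℝ (fun t => genFun γ a b (x, t)) s :=
    (analyticAt_genFun hγ hab (mk_mem_quadDomain hx0 hx1 hs)).comp
      (analyticAt_const.prod analyticAt_id)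
  have htaylor := hasSum_iteratedDeriv_mul_pow han (fun s hs => ?_) ht
  · simpa only [hcoeff] using htaylor
  · simp only [hcoeff]
    convert! summable_hypCoeff_mul_hyp_mul_pow hx0.le hx1 b (a + γ) (a + b + 1) a b γ
      ((abs_neg s).trans_lt hs) using 2 with n
    rw [neg_pow]
    ring

lemma deltaF_eq_quadVars_fst (hp : (x, t) ∈ quadDomain) (ht : t ≠ 0) :
    deltaF x t = (quadVars (x, t)).1 := by
  have hsq := Real.sq_sqrt hp.1.le
  rw [deltaF, quadVars, div_eq_div_iff (by positivity) hp.2.1.ne']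
  simp only [quadRoot, quadDisc] at hsq ⊢
  linear_combination -hsq / 2

lemma genFun_eq_deltaF (hab : ∀ m : ℕ, a + b + 1 ≠ -(m : ℝ)) (hp : (x, t) ∈ quadDomain)
    (hx : 0 < x) (ht : t ≠ 0) :
    genFun γ a b (x, t)
      = deltaF x t ^ b / (x ^ (a + γ) * (x - t * deltaF x t) ^ (b - a - γ))
        * hypExt (-a) b γ (deltaF x t)
        * hypExt (a + γ) (a + 1) (a + b + 1) (t * deltaF x t / x) := by
  have hq := hp.2.1
  have hw1 := quadVars_snd_lt_one hp
  have hw0 : 0 < 1 - (quadVars (x, t)).2 := sub_pos.2 hw1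
  have hw : t * (quadVars (x, t)).1 / x = (quadVars (x, t)).2 := by
    simp only [quadVars]
    field_simp
  have hsub : x - t * (quadVars (x, t)).1 = x * (1 - (quadVars (x, t)).2) := by
    simp only [quadVars]
    field_simp
  have heuler : hypExt b (b - γ + 1) (a + b + 1) (quadVars (x, t)).2
      = (1 - (quadVars (x, t)).2) ^ (-(b - a - γ))
        * hypExt (a + γ) (a + 1) (a + b + 1) (quadVars (x, t)).2 := by
    rw [hypExt_euler hab hw1, hypExt_comm hab hw1]
    congr 2 <;> ring
  have hpow : quadRoot (x, t) ^ (-b)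
      = (quadVars (x, t)).1 ^ b / (x ^ (a + γ) * x ^ (b - a - γ)) := by
    rw [← Real.rpow_add hx, show a + γ + (b - a - γ) = b by ring, quadVars,
      Real.div_rpow hx.le hq.le, Real.rpow_neg hq.le]
    have := (Real.rpow_pos_of_pos hx b).ne'
    field_simp
  rw [deltaF_eq_quadVars_fst hp ht, hw, hsub, genFun, pullback, heuler, hpow,
    Real.mul_rpow hx.le hw0.le, Real.rpow_neg hw0.le]
  ring

end GeneratingFunctionExpansion

lemma generating_summand_eq {α β c x t : ℝ} {n : ℕ} (hc : ∀ m : ℕ, c + 1 ≠ -(m : ℝ)) :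
    poch (α + β + c + 1) n * poch (c + 1) n / poch (α + β + 2*c + 2) n
        * Ufun α β c n x * t ^ n / (n.factorial : ℝ)
      = (-1) ^ n * hypCoeff (α + β + c + 1) (β + c + 1) (α + β + 2*c + 2) n
        * hyp (-(c + n)) (α + β + c + 1 + n) (1 + β) x * t ^ n := by
  have hpoch := poch_ne_zero hc n
  rw [Ufun, hypCoeff, show -(n : ℝ) - c = -(c + n) by ring,
    show (n : ℝ) + α + β + c + 1 = α + β + c + 1 + n by ring]
  field_simp

theorem U_generating_function_general (α β c x t : ℝ)
    (h₁ : ∀ m : ℕ, 1 + β ≠ -(m : ℝ))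
    (h₂ : ∀ m : ℕ, α + β + 2*c + 2 ≠ -(m : ℝ))
    (h₃ : ∀ m : ℕ, c + 1 ≠ -(m : ℝ))
    (hx0 : 0 < x) (hx1 : x < 1) (ht0 : 0 < |t|) (ht1 : |t| < 1) :
    HasSum (fun n : ℕ => poch (α + β + c + 1) n * poch (c + 1) n / poch (α + β + 2*c + 2) n
        * Ufun α β c n x * t^n / (Nat.factorial n : ℝ))
      (deltaF x t ^ (α + β + c + 1) / (x ^ (β + c + 1) * (x - t * deltaF x t) ^ α)
        * hypExt (-c) (α + β + c + 1) (1 + β) (deltaF x t)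
        * hypExt (β + c + 1) (c + 1) (α + β + 2*c + 2) (t * deltaF x t / x)) := by
  have hsum_param : c + (α + β + c + 1) + 1 = α + β + 2*c + 2 := by ring
  have hab : ∀ m : ℕ, c + (α + β + c + 1) + 1 ≠ -(m : ℝ) := by rwa [hsum_param]
  have hexpansion := hasSum_genFun h₁ hab hx0 hx1 ht1
  rw [genFun_eq_deltaF hab (mk_mem_quadDomain hx0 hx1 ht1) hx0 (abs_pos.1 ht0), hsum_param,
    show c + (1 + β) = β + c + 1 by ring,
    show α + β + c + 1 - c - (1 + β) = α by ring] at hexpansion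
  simpa only [generating_summand_eq h₃] using hexpansion

theorem U_generating_function (α β c x t : ℝ)
    (h₁ : ∀ m : ℕ, 1 + β ≠ -(m : ℝ))
    (h₂ : ∀ m : ℕ, α + β + 2*c + 2 ≠ -(m : ℝ))
    (h₃ : ∀ m : ℕ, c + 1 ≠ -(m : ℝ))
    (h₄ : ∀ m : ℕ, α + β + c + 1 ≠ -(m : ℝ))
    (h₅ : ∀ m : ℕ, α + β + 2*c + 1 ≠ -(m : ℝ))
    (hx0 : 0 < x) (hx1 : x < 1) (ht0 : 0 < |t|) (ht1 : |t| < 1) :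
    (∑' n : ℕ, poch (α + β + c + 1) n * poch (c + 1) n / poch (α + β + 2*c + 2) n
        * Ufun α β c n x * t^n / (Nat.factorial n : ℝ))
    = deltaF x t ^ (α + β + c + 1) / (x ^ (β + c + 1) * (x - t * deltaF x t) ^ α)
        * hypExt (-c) (α + β + c + 1) (1 + β) (deltaF x t)
        * hypExt (β + c + 1) (c + 1) (α + β + 2*c + 2) (t * deltaF x t / x) :=
  (U_generating_function_general α β c x t h₁ h₂ h₃ hx0 hx1 ht0 ht1).tsum_eq
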